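/- arXiv:1308.3090 — 2 statements merged into one kernel-verified Lean document; each statement's English description precedes it below -/
import Mathlib

section
/- Let ψ be a positive probability density on (0,∞), and let f and g be non-negative measurable functions with α := ∫₀^∞ f(x) dx < ∞ and β := ∫₀^∞ g(x) dx < ∞. Then D(f | ψ) + D(g | ψ) ≤ D(f + g | ψ) ≤ D(f | ψ) + D(g | ψ) + L(α+β) − L(α) − L(β). -/
open MeasureTheory Set
open scoped ENNReal

/-- `L x = x * log x` (with `L 0 = 0`, automatic since `Real.log 0 = 0`). -/
noncomputable def L (x : ℝ) : ℝ := x * Real.log x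

/-- The relative entropy `D(f | ψ) = ∫₀^∞ L (f x / ψ x) * ψ x dx`, with values in
`(-∞, ∞]`, realized in `EReal`.  Since `L t ≥ -e⁻¹` for `t ≥ 0`, for a probability
density `ψ` on `(0,∞)` the integrand shifted by `e⁻¹ * ψ` is nonnegative, so this
is faithfully computed by a Lebesgue integral shifted back by `e⁻¹`. -/
noncomputable def relEnt (f ψ : ℝ → ℝ) : EReal :=
  ((∫⁻ x in Ioi (0 : ℝ),
      ENNReal.ofReal (L (f x / ψ x) * ψ x + Real.exp (-1) * ψ x) : ℝ≥0∞) : EReal)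
    - ((Real.exp (-1) : ℝ) : EReal)

lemma L_lower (t : ℝ) (ht : 0 ≤ t) : 0 ≤ L t + Real.exp (-1) := by
  unfold L
  rcases ht.eq_or_lt with rfl | ht
  · simp; positivity
  · have h := Real.log_le_sub_one_of_pos (x := Real.exp (-1) / t) (by positivity)
    rw [Real.log_div (by positivity) ht.ne', Real.log_exp] at h
    have h2 := mul_le_mul_of_nonneg_left h ht.le
    have h3 : t * (Real.exp (-1) / t - 1) = Real.exp (-1) - t := by field_simp
    rw [h3] at h2
    linarith

lemma L_super (a b : ℝ) (ha : 0 ≤ a) (hb : 0 ≤ b) : L a + L b ≤ L (a + b) := by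
  have key : ∀ a b : ℝ, 0 ≤ a → 0 ≤ b → a * Real.log a ≤ a * Real.log (a + b) := by
    intro a b ha hb
    rcases ha.eq_or_lt with rfl | ha
    · simp
    · exact mul_le_mul_of_nonneg_left (Real.log_le_log ha (by linarith)) ha.le
  have h1 := key a b ha hb
  have h2 := key b a hb ha
  rw [add_comm b a] at h2
  unfold L
  linarith

lemma L_gibbs (a b α β : ℝ) (ha : 0 ≤ a) (hb : 0 ≤ b) (hα : 0 < α) (hβ : 0 < β) :
    L (a + b) ≤ L a + L b + (Real.log (α + β) - Real.log α) * a
      + (Real.log (α + β) - Real.log β) * b := by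
  have key : ∀ a b p s : ℝ, 0 ≤ a → 0 ≤ b → 0 < p → 0 < s →
      a * (Real.log (a + b) + (Real.log p - Real.log s) - Real.log a)
        ≤ (a + b) * (p / s) - a := by
    intro a b p s ha hb hp hs
    rcases ha.eq_or_lt with rfl | ha
    · simp; positivity
    · have h := Real.log_le_sub_one_of_pos (x := (a + b) * (p / s) / a) (by positivity)
      rw [Real.log_div (by positivity) ha.ne', Real.log_mul (by positivity) (by positivity),
        Real.log_div hp.ne' hs.ne'] at h
      have h2 := mul_le_mul_of_nonneg_left h ha.le
      have h3 : a * ((a + b) * (p / s) / a - 1) = (a + b) * (p / s) - a := by field_simp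
      rwa [h3] at h2
  have h1 := key a b α (α + β) ha hb hα (by linarith)
  have h2 := key b a β (α + β) hb ha hβ (by linarith)
  rw [add_comm b a] at h2
  have h3 : (a + b) * (α / (α + β)) + (a + b) * (β / (α + β)) = a + b := by field_simp
  unfold L
  linarith

lemma ereal_lower (a b h : ℝ≥0∞) (e : ℝ) (he : 0 ≤ e) (H : a + b ≤ h + ENNReal.ofReal e) :
    ((a : EReal) - (e : EReal)) + ((b : EReal) - (e : EReal)) ≤ (h : EReal) - (e : EReal) := by
  induction h with
  | top => simp
  | coe h =>
    have hne : a + b ≠ ⊤ := ne_top_of_le_ne_top (by simp) H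
    lift a to NNReal using (by rintro rfl; simp at hne)
    lift b to NNReal using (by rintro rfl; simp at hne)
    lift e to NNReal using he
    rw [ENNReal.ofReal_coe_nnreal] at H
    have H' : (a : ℝ) + b ≤ h + e := by exact_mod_cast H
    have : ((a : ℝ) - e) + ((b : ℝ) - e) ≤ (h : ℝ) - e := by linarith
    exact EReal.coe_le_coe_iff.2 this

lemma ereal_upper (a b h : ℝ≥0∞) (e k : ℝ) (he : 0 ≤ e) (hk : 0 ≤ k)
    (H : h + ENNReal.ofReal e ≤ a + b + ENNReal.ofReal k) :
    (h : EReal) - (e : EReal)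
      ≤ ((a : EReal) - (e : EReal)) + ((b : EReal) - (e : EReal)) + (k : EReal) := by
  have nb : ∀ x : ℝ≥0∞, (x : EReal) - (e : EReal) ≠ ⊥ := by
    intro x
    induction x with
    | top => simp
    | coe x =>
      have : ((x : ℝ≥0∞) : EReal) - (e : EReal) = (((x : ℝ) - e : ℝ) : EReal) := by norm_cast
      rw [this]; exact EReal.coe_ne_bot _
  by_cases ha : a = ⊤
  · subst ha
    rw [EReal.coe_ennreal_top, EReal.top_sub_coe, EReal.top_add_of_ne_bot (nb b),
      EReal.top_add_coe]
    exact le_top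
  by_cases hb : b = ⊤
  · subst hb
    rw [EReal.coe_ennreal_top, EReal.top_sub_coe, EReal.add_top_of_ne_bot (nb a),
      EReal.top_add_coe]
    exact le_top
  lift a to NNReal using ha
  lift b to NNReal using hb
  have hne : h + ENNReal.ofReal e ≠ ⊤ := ne_top_of_le_ne_top (by simp) H
  lift h to NNReal using (by rintro rfl; simp at hne)
  lift e to NNReal using he
  lift k to NNReal using hk
  rw [ENNReal.ofReal_coe_nnreal, ENNReal.ofReal_coe_nnreal] at H
  have H' : (h : ℝ) + e ≤ a + b + k := by exact_mod_cast H
  have : (h : ℝ) - e ≤ ((a : ℝ) - e) + ((b : ℝ) - e) + k := by linarith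
  exact EReal.coe_le_coe_iff.2 this

theorem stmt6 (ψ : ℝ → ℝ) (hψmeas : Measurable ψ)
    (hψpos : ∀ x ∈ Ioi (0 : ℝ), 0 < ψ x)
    (hψint : IntegrableOn ψ (Ioi (0 : ℝ)))
    (hψprob : ∫ x in Ioi (0 : ℝ), ψ x = 1)
    (f g : ℝ → ℝ)
    (hfmeas : Measurable f) (hf0 : ∀ x, 0 ≤ f x)
    (hfint : IntegrableOn f (Ioi (0 : ℝ)))
    (hgmeas : Measurable g) (hg0 : ∀ x, 0 ≤ g x)
    (hgint : IntegrableOn g (Ioi (0 : ℝ)))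
    (α β : ℝ)
    (hαdef : α = ∫ x in Ioi (0 : ℝ), f x)
    (hβdef : β = ∫ x in Ioi (0 : ℝ), g x) :
    relEnt f ψ + relEnt g ψ ≤ relEnt (fun x => f x + g x) ψ ∧
      relEnt (fun x => f x + g x) ψ
        ≤ relEnt f ψ + relEnt g ψ + ((L (α + β) - L α - L β : ℝ) : EReal) := by
  have he : 0 ≤ Real.exp (-1) := (Real.exp_pos _).le
  have hLm : Measurable L := by unfold L; fun_prop
  set μ := volume.restrict (Ioi (0 : ℝ)) with hμ
  have hpos : ∀ᵐ x ∂μ, 0 < ψ x := by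
    rw [hμ]; exact (ae_restrict_mem measurableSet_Ioi).mono hψpos
  have hm : ∀ u : ℝ → ℝ, Measurable u →
      Measurable fun x => ENNReal.ofReal (L (u x / ψ x) * ψ x + Real.exp (-1) * ψ x) := by
    intro u hu
    exact ((((hLm.comp (hu.div hψmeas)).mul hψmeas).add (hψmeas.const_mul _))).ennreal_ofReal
  have hnn : ∀ u p : ℝ, 0 ≤ u → 0 < p → 0 ≤ L (u / p) * p + Real.exp (-1) * p := by
    intro u p hu hp
    rw [← add_mul]
    exact mul_nonneg (L_lower _ (by positivity)) hp.le
  have hpsi : ∫⁻ x, ENNReal.ofReal (Real.exp (-1) * ψ x) ∂μ = ENNReal.ofReal (Real.exp (-1)) := by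
    rw [← ofReal_integral_eq_lintegral_ofReal (hψint.const_mul _)
      (hpos.mono fun x hx => mul_nonneg he hx.le), integral_const_mul, hψprob, mul_one]
  have hfg := hm (fun x => f x + g x) (hfmeas.add hgmeas)
  have hα0 : 0 ≤ α := hαdef ▸ integral_nonneg hf0
  have hβ0 : 0 ≤ β := hβdef ▸ integral_nonneg hg0
  constructor
  · apply ereal_lower _ _ _ _ he
    rw [← hpsi, ← lintegral_add_left (hm f hfmeas), ← lintegral_add_left hfg]
    apply lintegral_mono_ae
    filter_upwards [hpos] with x hx
    rw [← ENNReal.ofReal_add (hnn _ _ (hf0 x) hx) (hnn _ _ (hg0 x) hx),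
      ← ENNReal.ofReal_add (hnn _ _ (add_nonneg (hf0 x) (hg0 x)) hx) (mul_nonneg he hx.le)]
    apply ENNReal.ofReal_le_ofReal
    have h := mul_le_mul_of_nonneg_right (L_super (f x / ψ x) (g x / ψ x)
      (div_nonneg (hf0 x) hx.le) (div_nonneg (hg0 x) hx.le)) hx.le
    rw [← add_div] at h
    linarith
  · obtain ⟨c, d, hc, hd, hcd, hpt⟩ : ∃ c d : ℝ, 0 ≤ c ∧ 0 ≤ d ∧
        L (α + β) - L α - L β = c * α + d * β ∧
        ∀ᵐ x ∂μ, L (f x / ψ x + g x / ψ x)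
          ≤ L (f x / ψ x) + L (g x / ψ x) + c * (f x / ψ x) + d * (g x / ψ x) := by
      rcases hα0.eq_or_lt with h0 | hα
      · refine ⟨0, 0, le_rfl, le_rfl, by simp [← h0, L], ?_⟩
        have hz := (integral_eq_zero_iff_of_nonneg hf0 hfint).1 (hαdef.symm.trans h0.symm)
        filter_upwards [hz] with x hx
        simp only [Pi.zero_apply] at hx
        simp [hx, L]
      rcases hβ0.eq_or_lt with h0 | hβ
      · refine ⟨0, 0, le_rfl, le_rfl, by simp [← h0, L], ?_⟩
        have hz := (integral_eq_zero_iff_of_nonneg hg0 hgint).1 (hβdef.symm.trans h0.symm)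
        filter_upwards [hz] with x hx
        simp only [Pi.zero_apply] at hx
        simp [hx, L]
      refine ⟨Real.log (α + β) - Real.log α, Real.log (α + β) - Real.log β,
        sub_nonneg.2 (Real.log_le_log hα (by linarith)),
        sub_nonneg.2 (Real.log_le_log hβ (by linarith)), by unfold L; ring, ?_⟩
      filter_upwards [hpos] with x hx
      exact L_gibbs _ _ _ _ (div_nonneg (hf0 x) hx.le) (div_nonneg (hg0 x) hx.le) hα hβ
    have hk : 0 ≤ L (α + β) - L α - L β := by rw [hcd]; positivity
    have hcfg : ∀ x, 0 ≤ c * f x + d * g x := fun x =>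
      add_nonneg (mul_nonneg hc (hf0 x)) (mul_nonneg hd (hg0 x))
    have hK : ∫⁻ x, ENNReal.ofReal (c * f x + d * g x) ∂μ
        = ENNReal.ofReal (L (α + β) - L α - L β) := by
      have hi : Integrable (fun x => c * f x + d * g x) μ :=
        (hfint.const_mul c).add (hgint.const_mul d)
      rw [← ofReal_integral_eq_lintegral_ofReal hi
        (Filter.Eventually.of_forall hcfg),
        integral_add (hfint.const_mul c) (hgint.const_mul d),
        integral_const_mul, integral_const_mul, ← hαdef, ← hβdef, hcd]
    have hFG : Measurable fun x =>
        ENNReal.ofReal (L (f x / ψ x) * ψ x + Real.exp (-1) * ψ x)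
          + ENNReal.ofReal (L (g x / ψ x) * ψ x + Real.exp (-1) * ψ x) :=
      (hm f hfmeas).add (hm g hgmeas)
    apply ereal_upper _ _ _ _ _ he hk
    rw [← hpsi, ← hK, ← lintegral_add_left (hm f hfmeas), ← lintegral_add_left hfg,
      ← lintegral_add_left hFG]
    apply lintegral_mono_ae
    filter_upwards [hpos, hpt] with x hx hp
    rw [← ENNReal.ofReal_add (hnn _ _ (hf0 x) hx) (hnn _ _ (hg0 x) hx),
      ← ENNReal.ofReal_add (hnn _ _ (add_nonneg (hf0 x) (hg0 x)) hx) (mul_nonneg he hx.le),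
      ← ENNReal.ofReal_add (add_nonneg (hnn _ _ (hf0 x) hx) (hnn _ _ (hg0 x) hx)) (hcfg x)]
    apply ENNReal.ofReal_le_ofReal
    have h := mul_le_mul_of_nonneg_right hp hx.le
    have h1 : f x / ψ x * ψ x = f x := div_mul_cancel₀ _ hx.ne'
    have h2 : g x / ψ x * ψ x = g x := div_mul_cancel₀ _ hx.ne'
    rw [← add_div, add_mul, add_mul, mul_assoc c, mul_assoc d, h1, h2] at h
    linarith
end

section
/- Let ψ be a positive probability density on (0,∞), and let (f_n) and (g_n) be sequences of non-negative measurable functions such that ∫₀^∞ f_n(x) dx → 1 and ∫₀^∞ g_n(x) dx → 0 as n → ∞. Then D(f_n + g_n | ψ) − D(f_n | ψ) − D(g_n | ψ) → 0 as n → ∞ (in the sense that the difference is bounded in absolute value by a sequence tending to 0, whenever the entropies are finite; in particular D(f_n+g_n|ψ) is finite iff both D(f_n|ψ) and D(g_n|ψ) are). -/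
open MeasureTheory Set
open scoped ENNReal

lemma aux_upper {u w A S : ℝ} (hu : 0 ≤ u) (huw : u ≤ w) (hA : 0 < A) (hS : 0 < S) :
    u * (Real.log w - Real.log u) ≤ u * (Real.log S - Real.log A) + w * (A / S) - u := by
  rcases hu.eq_or_lt with rfl | hu
  · simp only [zero_mul, zero_add, sub_zero]; positivity
  · have hw : 0 < w := hu.trans_le huw
    have h := Real.log_le_sub_one_of_pos (x := (w * A) / (u * S)) (by positivity)
    rw [Real.log_div (by positivity) (by positivity), Real.log_mul hw.ne' hA.ne',
      Real.log_mul hu.ne' hS.ne'] at h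
    have h2 := mul_le_mul_of_nonneg_left h hu.le
    have h3 : u * (w * A / (u * S) - 1) = w * (A / S) - u := by field_simp
    rw [h3] at h2
    linarith

lemma L_upper {u v A B : ℝ} (hu : 0 ≤ u) (hv : 0 ≤ v) (hA : 0 < A) (hB : 0 < B) :
    L (u + v) - L u - L v ≤ u * (Real.log (A + B) - Real.log A)
      + v * (Real.log (A + B) - Real.log B) := by
  have h1 := aux_upper hu (le_add_of_nonneg_right hv : u ≤ u + v) hA (add_pos hA hB)
  have h2 := aux_upper hv (le_add_of_nonneg_left hu : v ≤ u + v) hB (add_pos hA hB)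
  have h3 : (u + v) * (A / (A + B)) + (u + v) * (B / (A + B)) = u + v := by
    have : A + B ≠ 0 := by positivity
    field_simp
  unfold L
  linarith

lemma aux_lower {u w : ℝ} (hu : 0 ≤ u) (huw : u ≤ w) :
    0 ≤ u * (Real.log w - Real.log u) := by
  rcases hu.eq_or_lt with rfl | hu
  · simp
  · exact mul_nonneg hu.le (sub_nonneg.2 (Real.log_le_log hu huw))

lemma L_lower_s7 {u v : ℝ} (hu : 0 ≤ u) (hv : 0 ≤ v) : 0 ≤ L (u + v) - L u - L v := by
  have h1 := aux_lower hu (le_add_of_nonneg_right hv : u ≤ u + v)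
  have h2 := aux_lower hv (le_add_of_nonneg_left hu : v ≤ u + v)
  unfold L
  linarith

lemma L_ge {t : ℝ} (ht : 0 ≤ t) : 0 ≤ L t + Real.exp (-1) := by
  unfold L
  rcases ht.eq_or_lt with rfl | ht
  · simp [Real.exp_nonneg]
  · have h := Real.add_one_le_exp (-1 - Real.log t)
    rw [Real.exp_sub, Real.exp_log ht, le_div_iff₀ ht] at h
    linarith

lemma L_measurable : Measurable L := measurable_id.mul Real.measurable_log

lemma relEnt_lt_top_iff {ψ f : ℝ → ℝ} (hψmeas : Measurable ψ)
    (hψpos : ∀ x ∈ Ioi (0 : ℝ), 0 < ψ x)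
    (hψint : IntegrableOn ψ (Ioi (0 : ℝ)))
    (hfmeas : Measurable f) (hf0 : ∀ x, 0 ≤ f x) :
    relEnt f ψ < ⊤ ↔ IntegrableOn (fun x => L (f x / ψ x) * ψ x) (Ioi (0 : ℝ)) := by
  have hm : Measurable (fun x => L (f x / ψ x) * ψ x + Real.exp (-1) * ψ x) :=
    ((L_measurable.comp (hfmeas.div hψmeas)).mul hψmeas).add (hψmeas.const_mul _)
  have hnn : 0 ≤ᵐ[volume.restrict (Ioi (0 : ℝ))]
      (fun x => L (f x / ψ x) * ψ x + Real.exp (-1) * ψ x) := by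
    filter_upwards [ae_restrict_mem measurableSet_Ioi] with x hx
    have := mul_nonneg (L_ge (div_nonneg (hf0 x) (hψpos x hx).le)) (hψpos x hx).le
    simp only [Pi.zero_apply]
    linarith
  have hc := hψint.const_mul (Real.exp (-1))
  have e1 : IntegrableOn (fun x => L (f x / ψ x) * ψ x + Real.exp (-1) * ψ x) (Ioi (0 : ℝ)) ↔
      IntegrableOn (fun x => L (f x / ψ x) * ψ x) (Ioi (0 : ℝ)) := by
    constructor
    · intro h
      have := h.sub hc
      refine this.congr (Filter.Eventually.of_forall fun x => ?_)
      simp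
    · intro h; exact h.add hc
  rw [← e1, IntegrableOn, ← lintegral_ofReal_ne_top_iff_integrable hm.aestronglyMeasurable hnn]
  unfold relEnt
  generalize (∫⁻ x in Ioi (0 : ℝ),
      ENNReal.ofReal (L (f x / ψ x) * ψ x + Real.exp (-1) * ψ x)) = I
  induction I with
  | top => simp
  | coe r =>
    simp only [ne_eq, ENNReal.coe_ne_top, not_false_eq_true, iff_true]
    exact EReal.coe_lt_top ((r : ℝ) - Real.exp (-1))

lemma relEnt_toReal {ψ f : ℝ → ℝ} 
    (hψpos : ∀ x ∈ Ioi (0 : ℝ), 0 < ψ x)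
    (hψint : IntegrableOn ψ (Ioi (0 : ℝ)))
    (hψprob : ∫ x in Ioi (0 : ℝ), ψ x = 1)
    (hf0 : ∀ x, 0 ≤ f x)
    (h : IntegrableOn (fun x => L (f x / ψ x) * ψ x) (Ioi (0 : ℝ))) :
    (relEnt f ψ).toReal = ∫ x in Ioi (0 : ℝ), L (f x / ψ x) * ψ x := by
  have hc := hψint.const_mul (Real.exp (-1))
  have hnn : 0 ≤ᵐ[volume.restrict (Ioi (0 : ℝ))]
      (fun x => L (f x / ψ x) * ψ x + Real.exp (-1) * ψ x) := by
    filter_upwards [ae_restrict_mem measurableSet_Ioi] with x hx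
    have := mul_nonneg (L_ge (div_nonneg (hf0 x) (hψpos x hx).le)) (hψpos x hx).le
    simp only [Pi.zero_apply]
    linarith
  have hI := ofReal_integral_eq_lintegral_ofReal (h.add hc) hnn
  have hval : ∫ x in Ioi (0 : ℝ), (L (f x / ψ x) * ψ x + Real.exp (-1) * ψ x) =
      (∫ x in Ioi (0 : ℝ), L (f x / ψ x) * ψ x) + Real.exp (-1) := by
    rw [integral_add h hc, integral_const_mul, hψprob, mul_one]
  have h0 := integral_nonneg_of_ae hnn
  unfold relEnt
  simp only [Pi.add_apply] at hI
  rw [← hI, hval, EReal.coe_ennreal_ofReal, max_eq_left (hval ▸ h0), ← EReal.coe_sub,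
    EReal.toReal_coe]
  ring

theorem stmt7 (ψ : ℝ → ℝ) (hψmeas : Measurable ψ)
    (hψpos : ∀ x ∈ Ioi (0 : ℝ), 0 < ψ x)
    (hψint : IntegrableOn ψ (Ioi (0 : ℝ)))
    (hψprob : ∫ x in Ioi (0 : ℝ), ψ x = 1)
    (f g : ℕ → ℝ → ℝ)
    (hfmeas : ∀ n, Measurable (f n)) (hf0 : ∀ n x, 0 ≤ f n x)
    (hfint : ∀ n, IntegrableOn (f n) (Ioi (0 : ℝ)))
    (hgmeas : ∀ n, Measurable (g n)) (hg0 : ∀ n x, 0 ≤ g n x)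
    (hgint : ∀ n, IntegrableOn (g n) (Ioi (0 : ℝ)))
    (hflim : Filter.Tendsto (fun n => ∫ x in Ioi (0 : ℝ), f n x)
      Filter.atTop (nhds 1))
    (hglim : Filter.Tendsto (fun n => ∫ x in Ioi (0 : ℝ), g n x)
      Filter.atTop (nhds 0)) :
    (∀ n, relEnt (fun x => f n x + g n x) ψ < ⊤ ↔
        relEnt (f n) ψ < ⊤ ∧ relEnt (g n) ψ < ⊤) ∧
      ∃ ε : ℕ → ℝ, Filter.Tendsto ε Filter.atTop (nhds 0) ∧
        ∀ n, relEnt (f n) ψ < ⊤ → relEnt (g n) ψ < ⊤ →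
          |(relEnt (fun x => f n x + g n x) ψ).toReal
              - (relEnt (f n) ψ).toReal - (relEnt (g n) ψ).toReal| ≤ ε n := by
  have key : ∀ n (A B : ℝ), 0 < A → 0 < B → ∀ x ∈ Ioi (0 : ℝ),
      0 ≤ L ((f n x + g n x) / ψ x) * ψ x - L (f n x / ψ x) * ψ x - L (g n x / ψ x) * ψ x ∧
      L ((f n x + g n x) / ψ x) * ψ x - L (f n x / ψ x) * ψ x - L (g n x / ψ x) * ψ x ≤
        (Real.log (A + B) - Real.log A) * f n x + (Real.log (A + B) - Real.log B) * g n x := by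
    intro n A B hA hB x hx
    have hp := hψpos x hx
    have hu := div_nonneg (hf0 n x) hp.le
    have hv := div_nonneg (hg0 n x) hp.le
    have h1 := mul_nonneg (L_lower_s7 hu hv) hp.le
    have h2 := mul_le_mul_of_nonneg_right (L_upper hu hv hA hB) hp.le
    have e1 : f n x / ψ x * ψ x = f n x := div_mul_cancel₀ _ hp.ne'
    have e2 : g n x / ψ x * ψ x = g n x := div_mul_cancel₀ _ hp.ne'
    rw [add_div]
    constructor
    · linarith
    · have e3 : (f n x / ψ x * (Real.log (A + B) - Real.log A)
        + g n x / ψ x * (Real.log (A + B) - Real.log B)) * ψ x =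
        (Real.log (A + B) - Real.log A) * (f n x / ψ x * ψ x)
          + (Real.log (A + B) - Real.log B) * (g n x / ψ x * ψ x) := by ring
      rw [e1, e2] at e3
      linarith
  have hsm : ∀ k : ℝ → ℝ, Measurable k → AEStronglyMeasurable
      (fun x => L (k x / ψ x) * ψ x) (volume.restrict (Ioi (0 : ℝ))) := fun k hk =>
    ((L_measurable.comp (hk.div hψmeas)).mul hψmeas).aestronglyMeasurable
  have hlow : ∀ k : ℝ → ℝ, (∀ x, 0 ≤ k x) → ∀ x ∈ Ioi (0 : ℝ),
      -(Real.exp (-1) * ψ x) ≤ L (k x / ψ x) * ψ x := by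
    intro k hk x hx
    have := mul_nonneg (L_ge (div_nonneg (hk x) (hψpos x hx).le)) (hψpos x hx).le
    linarith
  have hc := hψint.const_mul (Real.exp (-1))
  have ifff := fun n => relEnt_lt_top_iff hψmeas hψpos hψint (hfmeas n) (hf0 n)
  have iffg := fun n => relEnt_lt_top_iff hψmeas hψpos hψint (hgmeas n) (hg0 n)
  have hs0 : ∀ n x, 0 ≤ f n x + g n x := fun n x => add_nonneg (hf0 n x) (hg0 n x)
  have iffs := fun n => relEnt_lt_top_iff (f := fun x => f n x + g n x)
    hψmeas hψpos hψint ((hfmeas n).add (hgmeas n)) (hs0 n)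
  have hsum : ∀ n, IntegrableOn (fun x => L (f n x / ψ x) * ψ x) (Ioi (0 : ℝ)) →
      IntegrableOn (fun x => L (g n x / ψ x) * ψ x) (Ioi (0 : ℝ)) →
      IntegrableOn (fun x => L ((f n x + g n x) / ψ x) * ψ x) (Ioi (0 : ℝ)) := by
    intro n h1 h2
    refine integrable_of_le_of_le (hsm _ ((hfmeas n).add (hgmeas n)))
      (g₁ := fun x => L (f n x / ψ x) * ψ x + L (g n x / ψ x) * ψ x)
      (g₂ := fun x => (L (f n x / ψ x) * ψ x + L (g n x / ψ x) * ψ x) +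
        ((Real.log (1 + 1) - Real.log 1) * f n x + (Real.log (1 + 1) - Real.log 1) * g n x))
      ?_ ?_ (h1.add h2) ((h1.add h2).add (((hfint n).const_mul _).add ((hgint n).const_mul _)))
    · filter_upwards [ae_restrict_mem measurableSet_Ioi] with x hx
      have := (key n 1 1 one_pos one_pos x hx).1
      linarith
    · filter_upwards [ae_restrict_mem measurableSet_Ioi] with x hx
      have := (key n 1 1 one_pos one_pos x hx).2
      linarith
  refine ⟨fun n => ?_, ?_⟩
  · rw [iffs, ifff, iffg]
    refine ⟨fun h => ⟨?_, ?_⟩, fun h => hsum n h.1 h.2⟩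
    · refine integrable_of_le_of_le (hsm _ (hfmeas n)) (g₁ := fun x => -(Real.exp (-1) * ψ x))
        (g₂ := fun x => L ((f n x + g n x) / ψ x) * ψ x + Real.exp (-1) * ψ x)
        ?_ ?_ hc.neg (h.add hc)
      · filter_upwards [ae_restrict_mem measurableSet_Ioi] with x hx
        exact hlow _ (hf0 n) x hx
      · filter_upwards [ae_restrict_mem measurableSet_Ioi] with x hx
        have := (key n 1 1 one_pos one_pos x hx).1
        have := hlow _ (hg0 n) x hx
        linarith
    · refine integrable_of_le_of_le (hsm _ (hgmeas n)) (g₁ := fun x => -(Real.exp (-1) * ψ x))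
        (g₂ := fun x => L ((f n x + g n x) / ψ x) * ψ x + Real.exp (-1) * ψ x)
        ?_ ?_ hc.neg (h.add hc)
      · filter_upwards [ae_restrict_mem measurableSet_Ioi] with x hx
        exact hlow _ (hg0 n) x hx
      · filter_upwards [ae_restrict_mem measurableSet_Ioi] with x hx
        have := (key n 1 1 one_pos one_pos x hx).1
        have := hlow _ (hf0 n) x hx
        linarith
  · set A : ℕ → ℝ := fun n => (∫ x in Ioi (0 : ℝ), f n x) + 1 / ((n : ℝ) + 1) with hAdef
    set B : ℕ → ℝ := fun n => (∫ x in Ioi (0 : ℝ), g n x) + 1 / ((n : ℝ) + 1) with hBdef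
    have hd := tendsto_one_div_add_atTop_nhds_zero_nat (𝕜 := ℝ)
    have hA : Filter.Tendsto A Filter.atTop (nhds 1) := by simpa [hAdef] using hflim.add hd
    have hB : Filter.Tendsto B Filter.atTop (nhds 0) := by simpa [hBdef] using hglim.add hd
    have hLc : Continuous L := Real.continuous_mul_log
    refine ⟨fun n => L (A n + B n) - L (A n) - L (B n), ?_, ?_⟩
    · have h := (((hLc.tendsto _).comp (hA.add hB)).sub ((hLc.tendsto _).comp hA)).sub
        ((hLc.tendsto _).comp hB)
      simpa [L] using h
    · intro n h1 h2
      rw [ifff] at h1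
      rw [iffg] at h2
      have h3 := hsum n h1 h2
      have h4 : IntegrableOn (fun x => L ((f n x + g n x) / ψ x) * ψ x - L (f n x / ψ x) * ψ x)
        (Ioi (0 : ℝ)) := h3.sub h1
      rw [relEnt_toReal hψpos hψint hψprob (hf0 n) h1,
        relEnt_toReal hψpos hψint hψprob (hg0 n) h2,
        relEnt_toReal (f := fun x => f n x + g n x) hψpos hψint hψprob (hs0 n) h3,
        ← integral_sub h3 h1, ← integral_sub h4 h2]
      have hdn : (0 : ℝ) < 1 / ((n : ℝ) + 1) := by positivity
      have hF0 : 0 ≤ ∫ x in Ioi (0 : ℝ), f n x := integral_nonneg (hf0 n)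
      have hG0 : 0 ≤ ∫ x in Ioi (0 : ℝ), g n x := integral_nonneg (hg0 n)
      have hAn : 0 < A n := by simp only [hAdef]; linarith
      have hBn : 0 < B n := by simp only [hBdef]; linarith
      rw [abs_of_nonneg]
      · calc _ ≤ ∫ x in Ioi (0 : ℝ), ((Real.log (A n + B n) - Real.log (A n)) * f n x
              + (Real.log (A n + B n) - Real.log (B n)) * g n x) := by
              refine setIntegral_mono_on (h4.sub h2)
                (((hfint n).const_mul _).add ((hgint n).const_mul _)) measurableSet_Ioi ?_
              intro x hx
              exact (key n _ _ hAn hBn x hx).2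
          _ = (Real.log (A n + B n) - Real.log (A n)) * (∫ x in Ioi (0 : ℝ), f n x)
              + (Real.log (A n + B n) - Real.log (B n)) * (∫ x in Ioi (0 : ℝ), g n x) := by
              rw [integral_add ((hfint n).const_mul _) ((hgint n).const_mul _),
                integral_const_mul, integral_const_mul]
          _ ≤ (Real.log (A n + B n) - Real.log (A n)) * A n
              + (Real.log (A n + B n) - Real.log (B n)) * B n := by
              have l1 : Real.log (A n) ≤ Real.log (A n + B n) :=
                Real.log_le_log hAn (by linarith)
              have l2 : Real.log (B n) ≤ Real.log (A n + B n) :=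
                Real.log_le_log hBn (by linarith)
              refine add_le_add (mul_le_mul_of_nonneg_left ?_ (sub_nonneg.2 l1))
                (mul_le_mul_of_nonneg_left ?_ (sub_nonneg.2 l2))
              · simp only [hAdef]; linarith
              · simp only [hBdef]; linarith
          _ = _ := by unfold L; ring
      · exact setIntegral_nonneg measurableSet_Ioi
          fun x hx => (key n 1 1 one_pos one_pos x hx).1
end
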